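/- arXiv:2602.15029 — 8 statements merged into one kernel-verified Lean document; each statement's English description precedes it below -/
import Mathlib

section
/- Let σ > 0 and let L be a positive integer, and set q = exp(−2/(σL)). Define the periodized exponential kernel C(δ) = ∑_{m ∈ ℤ} exp(−|δ + 2m|/σ). Then for every integer n: ∑_{j=0}^{L−1} C(2j/L) · exp(−2πi n j / L) = (1 − q²) / (1 − 2q·cos(2πn/L) + q²). -/
open Finset Real Complex

/-- Discrete Fourier transform of the periodized exponential kernel
`C(δ) = ∑_{m∈ℤ} exp(−|δ+2m|/σ)` on the lattice `{2j/L}`: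
`∑_{j=0}^{L−1} C(2j/L) e^{−2πi n j/L} = (1−q²)/(1−2q cos(2πn/L)+q²)` with
`q = exp(−2/(σL))`. -/
theorem periodized_exponential_kernel_dft (σ : ℝ) (hσ : 0 < σ) (L : ℕ) (hL : 0 < L)
    (n : ℤ) :
    let q : ℝ := Real.exp (-2 / (σ * L))
    let C : ℝ → ℝ := fun δ => ∑' m : ℤ, Real.exp (-|δ + 2 * m| / σ)
    ∑ j ∈ Finset.range L,
        (C (2 * j / L) : ℂ) * Complex.exp (-(2 * Real.pi * Complex.I * n * j / L)) =
      (((1 - q ^ 2) / (1 - 2 * q * Real.cos (2 * Real.pi * n / L) + q ^ 2) : ℝ) : ℂ) := by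
  intro q C
  have hL' : (L : ℝ) ≠ 0 := by positivity
  have hLC : (L : ℂ) ≠ 0 := by exact_mod_cast hL.ne'
  have hLpos : (0 : ℝ) < L := by exact_mod_cast hL
  haveI : NeZero L := ⟨hL.ne'⟩
  have hq0 : 0 < q := Real.exp_pos _
  have hq1 : q < 1 := by
    apply Real.exp_lt_one_iff.mpr
    apply div_neg_of_neg_of_pos (by norm_num) (by positivity)
  set θ : ℝ := 2 * Real.pi * n / L with hθ
  set z : ℂ := q * Complex.exp (-(θ * Complex.I)) with hz
  set w : ℂ := q * Complex.exp (θ * Complex.I) with hw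
  have hnz : ‖z‖ < 1 := by
    rw [hz, norm_mul, ← neg_mul, ← Complex.ofReal_neg, Complex.norm_exp_ofReal_mul_I]
    simpa [abs_of_pos hq0] using hq1
  have hnw : ‖w‖ < 1 := by
    rw [hw, norm_mul, Complex.norm_exp_ofReal_mul_I]
    simpa [abs_of_pos hq0] using hq1
  let F : ℤ → ℂ := fun k => (Real.exp (-(2 * |(k : ℝ)|) / (σ * L)) : ℂ) *
    Complex.exp (-(k * (θ * Complex.I)))
  have hF1 : ∀ k : ℕ, F k = z ^ k := by
    intro k
    simp only [F, hz, mul_pow, q]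
    rw [← Complex.ofReal_pow, ← Real.exp_nat_mul, ← Complex.exp_nat_mul]
    congr 2
    · congr 1
      simp
      ring
    · push_cast
      ring
  have hF2 : ∀ k : ℕ, F (-(k + 1 : ℤ)) = w * w ^ k := by
    intro k
    rw [← pow_succ']
    simp only [F, hw, mul_pow, q]
    rw [← Complex.ofReal_pow, ← Real.exp_nat_mul, ← Complex.exp_nat_mul]
    congr 2
    · congr 1
      have : |((-(k + 1 : ℤ) : ℤ) : ℝ)| = k + 1 := by
        push_cast
        rw [abs_neg, abs_of_nonneg (by positivity)]
      rw [this]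
      push_cast
      ring
    · push_cast
      ring
  have hS : HasSum F ((1 - z)⁻¹ + w * (1 - w)⁻¹) := by
    apply HasSum.of_nat_of_neg_add_one
    · simp_rw [hF1]
      exact hasSum_geometric_of_norm_lt_one hnz
    · simp_rw [hF2]
      exact (hasSum_geometric_of_norm_lt_one hnw).mul_left w
  let e : Fin L × ℤ ≃ ℤ := (Equiv.prodComm _ _).trans (Int.divModEquiv L).symm
  have hS2 : HasSum (F ∘ e) ((1 - z)⁻¹ + w * (1 - w)⁻¹) := e.hasSum_iff.mpr hS
  have hg := hS2.prod_fiberwise (fun j => (hS2.summable.prod_factor j).hasSum)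
  have key := hg.unique (hasSum_fintype _)
  have hfib : ∀ j : Fin L, ∑' m : ℤ, (F ∘ e) (j, m) = (C (2 * (j : ℕ) / L) : ℂ) *
      Complex.exp (-(2 * Real.pi * Complex.I * n * (j : ℕ) / L)) := by
    intro j
    simp only [C]
    rw [Complex.ofReal_tsum, ← tsum_mul_right]
    apply tsum_congr
    intro m
    have he : e (j, m) = m * L + (j : ℕ) := rfl
    simp only [Function.comp, he, F]
    congr 1
    · congr 2
      have : (2 * ((j : ℕ) : ℝ) / L + 2 * m) = 2 / L * ((m * L + (j : ℕ) : ℤ) : ℝ) := by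
        push_cast
        field_simp
        ring
      rw [this, abs_mul, abs_of_pos (by positivity : (0 : ℝ) < 2 / L)]
      field_simp
    · rw [Complex.exp_eq_exp_iff_exists_int]
      refine ⟨-(m * n), ?_⟩
      rw [hθ]
      push_cast
      field_simp
      ring
  rw [Finset.sum_range (fun j : ℕ => (C (2 * j / L) : ℂ) *
      Complex.exp (-(2 * Real.pi * Complex.I * n * j / L)))]
  rw [← Finset.sum_congr rfl (fun j _ => hfib j), ← key]
  have hzw : z * w = (q : ℂ) ^ 2 := by
    rw [hz, hw]
    have : Complex.exp (-(θ * Complex.I)) * Complex.exp (θ * Complex.I) = 1 := by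
      rw [← Complex.exp_add]; simp
    linear_combination (q : ℂ) ^ 2 * this
  have hzw2 : z + w = 2 * q * Complex.cos θ := by
    rw [hz, hw, Complex.cos, ← neg_mul]
    ring
  have h1 : 1 - z ≠ 0 := fun h => by
    rw [← sub_eq_zero.mp h] at hnz; simp at hnz
  have h2 : 1 - w ≠ 0 := fun h => by
    rw [← sub_eq_zero.mp h] at hnw; simp at hnw
  push_cast
  have hD : 1 - 2 * (q : ℂ) * Complex.cos θ + (q : ℂ) ^ 2 = (1 - z) * (1 - w) := by
    rw [← hzw, ← hzw2]; ring
  have hθc : (2 * (Real.pi : ℂ) * n / L) = (θ : ℂ) := by rw [hθ]; push_cast; rfl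
  rw [hD, ← hzw]
  field_simp
  ring
end

section
/- Let σ > 0 and let k > 0 satisfy tan k = −σk (equivalently, sin k + σk·cos k = 0). Then for every x ∈ [−1, 1]: ∫_{−1}^{1} exp(−|x−y|/σ) · sin(k y) dy = (2σ / (1 + σ²k²)) · sin(k x). -/
open Real intervalIntegral

lemma int_exp_sin_aux (a k x p q : ℝ) (hk : 0 < k) :
    ∫ y in p..q, Real.exp (a * (y - x)) * Real.sin (k * y) =
      Real.exp (a * (q - x)) * (a * Real.sin (k * q) - k * Real.cos (k * q)) / (a ^ 2 + k ^ 2)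
      - Real.exp (a * (p - x)) * (a * Real.sin (k * p) - k * Real.cos (k * p)) / (a ^ 2 + k ^ 2) := by
  have hne : a ^ 2 + k ^ 2 ≠ 0 := by positivity
  refine intervalIntegral.integral_eq_sub_of_hasDerivAt
    (f := fun y => Real.exp (a * (y - x)) * (a * Real.sin (k * y) - k * Real.cos (k * y)) / (a ^ 2 + k ^ 2)) ?_ ?_
  · intro y _
    have h1 : HasDerivAt (fun y : ℝ => k * y) k y := by
      simpa using (hasDerivAt_id y).const_mul k
    have h2 : HasDerivAt (fun y : ℝ => a * (y - x)) a y := by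
      simpa using ((hasDerivAt_id y).sub_const x).const_mul a
    have h := (h2.exp.mul ((h1.sin.const_mul a).sub (h1.cos.const_mul k))).div_const (a ^ 2 + k ^ 2)
    refine h.congr_deriv ?_
    simp only [Pi.sub_apply]
    field_simp
    ring
  · exact Continuous.intervalIntegrable (by fun_prop) _ _

/-- Odd-sector eigenfunction identity for the exponential kernel operator on `[−1,1]`:
if `tan k = −σk` with `k > 0`, then `sin(kx)` is an eigenfunction of
`f ↦ ∫_{−1}^1 exp(−|x−y|/σ) f(y) dy` with eigenvalue `2σ/(1+σ²k²)`. -/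
theorem exponential_kernel_odd_eigenfunction (σ : ℝ) (hσ : 0 < σ) (k : ℝ) (hk : 0 < k)
    (hquant : Real.tan k = -(σ * k)) :
    ∀ x ∈ Set.Icc (-1 : ℝ) 1,
      ∫ y in (-1 : ℝ)..1, Real.exp (-|x - y| / σ) * Real.sin (k * y) =
        (2 * σ / (1 + σ ^ 2 * k ^ 2)) * Real.sin (k * x) := by
  intro x hx
  obtain ⟨hx1, hx2⟩ := hx
  have hc : Real.cos k ≠ 0 := by
    intro h
    rw [Real.tan_eq_sin_div_cos, h, div_zero] at hquant
    have := mul_pos hσ hk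
    linarith
  have hs : Real.sin k = -(σ * k) * Real.cos k := by
    rw [← hquant, Real.tan_mul_cos hc]
  have hcont : Continuous fun y : ℝ => Real.exp (-|x - y| / σ) * Real.sin (k * y) := by fun_prop
  rw [← intervalIntegral.integral_add_adjacent_intervals (b := x)
    (hcont.intervalIntegrable _ _) (hcont.intervalIntegrable _ _)]
  have e1 : ∫ y in (-1 : ℝ)..x, Real.exp (-|x - y| / σ) * Real.sin (k * y) =
      ∫ y in (-1 : ℝ)..x, Real.exp (σ⁻¹ * (y - x)) * Real.sin (k * y) := by
    refine intervalIntegral.integral_congr fun y hy => ?_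
    rw [Set.uIcc_of_le hx1] at hy
    have : -|x - y| / σ = σ⁻¹ * (y - x) := by
      rw [abs_of_nonneg (by linarith [hy.2])]; ring
    simp only [this]
  have e2 : ∫ y in x..1, Real.exp (-|x - y| / σ) * Real.sin (k * y) =
      ∫ y in x..1, Real.exp (-σ⁻¹ * (y - x)) * Real.sin (k * y) := by
    refine intervalIntegral.integral_congr fun y hy => ?_
    rw [Set.uIcc_of_le hx2] at hy
    have : -|x - y| / σ = -σ⁻¹ * (y - x) := by
      rw [abs_of_nonpos (by linarith [hy.1])]; ring
    simp only [this]
  rw [e1, e2, int_exp_sin_aux _ _ _ _ _ hk, int_exp_sin_aux _ _ _ _ _ hk]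
  have hA : σ⁻¹ * Real.sin k + k * Real.cos k = 0 := by
    rw [hs]; field_simp; ring
  have z1 : σ⁻¹ * Real.sin (k * -1) - k * Real.cos (k * -1) = 0 := by
    rw [mul_neg_one, Real.sin_neg, Real.cos_neg]; linarith
  have z2 : -σ⁻¹ * Real.sin (k * 1) - k * Real.cos (k * 1) = 0 := by
    rw [mul_one]; linarith
  rw [z1, z2]
  simp only [sub_self, mul_zero, Real.exp_zero, one_mul, zero_div, sub_zero, zero_sub, neg_sq]
  have hne : (σ⁻¹) ^ 2 + k ^ 2 ≠ 0 := by positivity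
  have hne' : 1 + σ ^ 2 * k ^ 2 ≠ 0 := by positivity
  have : (σ⁻¹) ^ 2 + k ^ 2 = (1 + σ ^ 2 * k ^ 2) / σ ^ 2 := by field_simp
  rw [this]
  field_simp
  ring
end

section
/- Let σ > 0 and let k > 0 satisfy tan k = k / (1 + σ(1+σ)k²). Define φ(y) = cos(k y) − sin(k)/k for y ∈ [−1, 1]. Then for every x ∈ [−1, 1]: ∫_{−1}^{1} exp(−|x−y|/σ) φ(y) dy − (1/2) ∫_{−1}^{1} ∫_{−1}^{1} exp(−|z−y|/σ) φ(y) dy dz = (2σ / (1 + σ²k²)) · φ(x). Moreover ∫_{−1}^{1} φ(y) dy = 0. -/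
open Real intervalIntegral


lemma aux_cos_int (k : ℝ) (hk : 0 < k) : ∫ y in (-1 : ℝ)..1, Real.cos (k * y) = 2 * (Real.sin k / k) := by
  have h : ∀ y ∈ Set.uIcc (-1 : ℝ) 1, HasDerivAt (fun y => Real.sin (k * y) / k) (Real.cos (k * y)) y := by
    intro y _
    have h1 : HasDerivAt (fun y : ℝ => k * y) k y := by
      simpa using (hasDerivAt_id y).const_mul k
    have := (h1.sin).div_const k
    refine this.congr_deriv ?_
    exact mul_div_cancel_right₀ _ hk.ne'
  rw [integral_eq_sub_of_hasDerivAt h (Continuous.intervalIntegrable (by fun_prop) _ _)]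
  simp
  ring

lemma aux_half (σ : ℝ) (hσ : 0 < σ) (k c x s p q : ℝ) (hs : s ^ 2 = 1) :
    ∫ y in p..q, Real.exp (s * (y - x) / σ) * (Real.cos (k * y) - c) =
      Real.exp (s * (q - x) / σ) *
        (σ * (s * Real.cos (k * q) + σ * k * Real.sin (k * q)) / (1 + σ ^ 2 * k ^ 2) - s * c * σ) -
      Real.exp (s * (p - x) / σ) *
        (σ * (s * Real.cos (k * p) + σ * k * Real.sin (k * p)) / (1 + σ ^ 2 * k ^ 2) - s * c * σ) := by
  have hD : (1 + σ ^ 2 * k ^ 2) ≠ 0 := by positivity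
  have h : ∀ y ∈ Set.uIcc p q, HasDerivAt (fun y => Real.exp (s * (y - x) / σ) *
        (σ * (s * Real.cos (k * y) + σ * k * Real.sin (k * y)) / (1 + σ ^ 2 * k ^ 2) - s * c * σ))
        (Real.exp (s * (y - x) / σ) * (Real.cos (k * y) - c)) y := by
    intro y _
    have h1 : HasDerivAt (fun y : ℝ => k * y) k y := by
      simpa using (hasDerivAt_id y).const_mul k
    have h2 : HasDerivAt (fun y : ℝ => s * (y - x) / σ) (s / σ) y := by
      simpa using (((hasDerivAt_id y).sub_const x).const_mul s).div_const σ
    have h3 := ((((h1.cos.const_mul s).add (h1.sin.const_mul (σ * k))).const_mul σ).div_const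
      (1 + σ ^ 2 * k ^ 2)).sub_const (s * c * σ)
    refine (h2.exp.mul h3).congr_deriv ?_
    simp only [Pi.add_apply]
    generalize Real.cos (k * y) = C
    generalize Real.sin (k * y) = S
    field_simp
    linear_combination (C - c * (1 + σ ^ 2 * k ^ 2)) * hs
  rw [integral_eq_sub_of_hasDerivAt h (Continuous.intervalIntegrable (by fun_prop) _ _)]

lemma aux_H (σ : ℝ) (hσ : 0 < σ) (k : ℝ)
    (hk : 0 < k) (hquant : Real.tan k = k / (1 + σ * (1 + σ) * k ^ 2)) (x : ℝ)
    (hx : x ∈ Set.Icc (-1 : ℝ) 1) :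
    ∫ y in (-1 : ℝ)..1, Real.exp (-|x - y| / σ) * (Real.cos (k * y) - Real.sin k / k) =
      2 * σ / (1 + σ ^ 2 * k ^ 2) * Real.cos (k * x) - 2 * σ * (Real.sin k / k) := by
  have hQ : 0 < 1 + σ * (1 + σ) * k ^ 2 := by positivity
  have hD : (1 + σ ^ 2 * k ^ 2) ≠ 0 := by positivity
  have hc : Real.cos k ≠ 0 := by
    intro h
    rw [Real.tan_eq_sin_div_cos, h, div_zero] at hquant
    have : 0 < k / (1 + σ * (1 + σ) * k ^ 2) := by positivity
    linarith
  rw [Real.tan_eq_sin_div_cos, div_eq_div_iff hc hQ.ne'] at hquant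
  have hB : σ * (Real.cos k - σ * k * Real.sin k) / (1 + σ ^ 2 * k ^ 2) - Real.sin k / k * σ = 0 := by
    field_simp
    linear_combination (-σ) * hquant
  have hcont : Continuous fun y => Real.exp (-|x - y| / σ) * (Real.cos (k * y) - Real.sin k / k) := by
    fun_prop
  rw [← integral_add_adjacent_intervals (hcont.intervalIntegrable (-1) x) (hcont.intervalIntegrable x 1)]
  have e1 : ∫ y in (-1 : ℝ)..x, Real.exp (-|x - y| / σ) * (Real.cos (k * y) - Real.sin k / k) =
      ∫ y in (-1 : ℝ)..x, Real.exp (1 * (y - x) / σ) * (Real.cos (k * y) - Real.sin k / k) := by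
    apply integral_congr
    intro y hy
    rw [Set.uIcc_of_le hx.1] at hy
    simp only
    rw [abs_of_nonneg (by linarith [hy.2])]
    congr 3
    ring
  have e2 : ∫ y in x..1, Real.exp (-|x - y| / σ) * (Real.cos (k * y) - Real.sin k / k) =
      ∫ y in x..1, Real.exp (-1 * (y - x) / σ) * (Real.cos (k * y) - Real.sin k / k) := by
    apply integral_congr
    intro y hy
    rw [Set.uIcc_of_le hx.2] at hy
    simp only
    rw [abs_of_nonpos (by linarith [hy.1])]
    congr 3
    ring
  rw [e1, e2, aux_half σ hσ _ _ _ _ _ _ (by norm_num), aux_half σ hσ _ _ _ _ _ _ (by norm_num)]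
  simp only [mul_neg, mul_one, Real.cos_neg, Real.sin_neg, sub_self, mul_zero, zero_div, Real.exp_zero]
  linear_combination (-Real.exp (1 * (-1 - x) / σ) - Real.exp (-1 * (1 - x) / σ)) * hB

/-- Even-sector eigenfunction identity for the mean-centered exponential kernel operator
on `[−1,1]`: if `tan k = k/(1+σ(1+σ)k²)` with `k > 0`, then the mean-zero function
`φ(y) = cos(ky) − sin(k)/k` satisfies `(PHP)φ = (2σ/(1+σ²k²))·φ`, where
`H` is convolution against `exp(−|·|/σ)` and `P` subtracts the mean. -/
theorem exponential_kernel_even_centered_eigenfunction (σ : ℝ) (hσ : 0 < σ) (k : ℝ)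
    (hk : 0 < k) (hquant : Real.tan k = k / (1 + σ * (1 + σ) * k ^ 2)) :
    let φ : ℝ → ℝ := fun y => Real.cos (k * y) - Real.sin k / k
    (∀ x ∈ Set.Icc (-1 : ℝ) 1,
      (∫ y in (-1 : ℝ)..1, Real.exp (-|x - y| / σ) * φ y) -
        (1 / 2) * ∫ z in (-1 : ℝ)..1, ∫ y in (-1 : ℝ)..1, Real.exp (-|z - y| / σ) * φ y =
      (2 * σ / (1 + σ ^ 2 * k ^ 2)) * φ x) ∧
    ∫ y in (-1 : ℝ)..1, φ y = 0 := by
  intro φ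
  have hc := aux_cos_int k hk
  have hi : IntervalIntegrable (fun y => Real.cos (k * y)) MeasureTheory.volume (-1) 1 :=
    Continuous.intervalIntegrable (by fun_prop) _ _
  refine ⟨?_, ?_⟩
  · intro x hx
    have e : ∫ z in (-1 : ℝ)..1, ∫ y in (-1 : ℝ)..1, Real.exp (-|z - y| / σ) * φ y =
        ∫ z in (-1 : ℝ)..1, (2 * σ / (1 + σ ^ 2 * k ^ 2) * Real.cos (k * z) - 2 * σ * (Real.sin k / k)) := by
      apply integral_congr
      intro z hz
      rw [Set.uIcc_of_le (by norm_num)] at hz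
      exact aux_H σ hσ k hk hquant z hz
    rw [e, integral_sub (hi.const_mul _) intervalIntegrable_const, integral_const_mul, hc,
      integral_const, aux_H σ hσ k hk hquant x hx]
    simp only [smul_eq_mul, φ]
    ring
  · simp only [φ]
    rw [integral_sub hi intervalIntegrable_const, hc, integral_const, smul_eq_mul]
    ring
end

section
/- Let σ > 0 and let f : [−1, 1] → ℝ be continuous. Define u(x) = ∫_{−1}^{1} exp(−|x−y|/σ) f(y) dy. Then u is differentiable at the endpoints (one-sidedly) and satisfies the Robin boundary identities u'(1) = −(1/σ)·u(1) and u'(−1) = (1/σ)·u(−1). -/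
open Real intervalIntegral

lemma aux_exp_lip (a b : ℝ) (ha : 0 ≤ a) (hb : 0 ≤ b) :
    |Real.exp (-a) - Real.exp (-b)| ≤ |a - b| := by
  wlog h : a ≤ b generalizing a b
  · rw [abs_sub_comm, abs_sub_comm a b]
    exact this b a hb ha (le_of_not_ge h)
  have h1 : Real.exp (-b) ≤ Real.exp (-a) := Real.exp_le_exp.2 (by linarith)
  rw [abs_of_nonneg (by linarith), abs_of_nonpos (by linarith)]
  have h2 : Real.exp (-b) = Real.exp (-a) * Real.exp (a - b) := by
    rw [← Real.exp_add]; congr 1; ring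
  have h3 := Real.add_one_le_exp (a - b)
  have h4 : Real.exp (-a) ≤ 1 := Real.exp_le_one_iff.2 (by linarith)
  have h5 := Real.exp_pos (-a)
  rw [h2]
  nlinarith

lemma aux_deriv (σ : ℝ) (hσ : 0 < σ) (f : ℝ → ℝ)
    (hf : ContinuousOn f (Set.Icc (-1 : ℝ) 1)) (x₀ s : ℝ)
    (hs : ∀ y, -1 < y → y < 1 → HasDerivAt (fun x : ℝ => |x - y|) s x₀) :
    HasDerivAt (fun x => ∫ y in (-1 : ℝ)..1, Real.exp (-|x - y| / σ) * f y)
      (-(s / σ) * ∫ y in (-1 : ℝ)..1, Real.exp (-|x₀ - y| / σ) * f y) x₀ := by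
  have hu : Set.uIcc (-1 : ℝ) 1 = Set.Icc (-1) 1 := Set.uIcc_of_le (by norm_num)
  have hc : ∀ x : ℝ, ContinuousOn (fun y => Real.exp (-|x - y| / σ) * f y)
      (Set.uIcc (-1 : ℝ) 1) := by
    intro x
    rw [hu]
    exact (Continuous.continuousOn (by fun_prop)).mul hf
  have hi := fun x => (hc x).intervalIntegrable (μ := MeasureTheory.volume)
  rw [← intervalIntegral.integral_const_mul]
  refine (intervalIntegral.hasDerivAt_integral_of_dominated_loc_of_lip
    (bound := fun y => |f y| / σ) (s := Set.univ) Filter.univ_mem ?_ (hi x₀) ?_ ?_ ?_ ?_).2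
  · exact Filter.Eventually.of_forall fun x => (hi x).def'.aestronglyMeasurable
  · exact ((hi x₀).const_mul _).def'.aestronglyMeasurable
  · refine Filter.Eventually.of_forall fun y _ => ?_
    refine LipschitzOnWith.of_dist_le_mul fun x _ z _ => ?_
    have h1 := aux_exp_lip (|x - y| / σ) (|z - y| / σ) (by positivity) (by positivity)
    have h2 : |(|x - y| / σ - |z - y| / σ)| ≤ |x - z| / σ := by
      rw [← sub_div, abs_div, abs_of_pos hσ]
      refine div_le_div_of_nonneg_right ?_ hσ.le
      have := abs_abs_sub_abs_le_abs_sub (x - y) (z - y)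
      simpa using this
    rw [Real.dist_eq, Real.dist_eq, ← sub_mul, abs_mul, neg_div, neg_div]
    have h3 := mul_le_mul_of_nonneg_right (h1.trans h2) (abs_nonneg (f y))
    refine h3.trans (le_of_eq ?_)
    simp only [Real.coe_nnabs, abs_div, abs_abs, abs_of_pos hσ]
    ring
  · refine ContinuousOn.intervalIntegrable ?_
    rw [hu]
    exact hf.abs.div_const _
  · have hne : ∀ᵐ y : ℝ, y ≠ 1 := by
      simp [MeasureTheory.ae_iff]
    filter_upwards [hne] with y hy hm
    rw [Set.uIoc_of_le (by norm_num)] at hm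
    have h := hs y hm.1 (lt_of_le_of_ne hm.2 hy)
    have h' : HasDerivAt (fun x : ℝ => Real.exp (-|x - y| / σ) * f y)
        (Real.exp (-|x₀ - y| / σ) * (-s / σ) * f y) x₀ :=
      (h.neg.div_const σ).exp.mul_const (f y)
    exact h'.congr_deriv (by ring)

/-- Robin boundary identities for the image of the exponential kernel operator:
if `f` is continuous on `[−1,1]` and `u(x) = ∫_{−1}^1 exp(−|x−y|/σ) f(y) dy`, then `u`
has one-sided derivatives at the endpoints satisfying `u'(1) = −(1/σ)·u(1)` and
`u'(−1) = (1/σ)·u(−1)`. -/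
theorem exponential_kernel_robin_boundary (σ : ℝ) (hσ : 0 < σ) (f : ℝ → ℝ)
    (hf : ContinuousOn f (Set.Icc (-1 : ℝ) 1)) :
    let u : ℝ → ℝ := fun x => ∫ y in (-1 : ℝ)..1, Real.exp (-|x - y| / σ) * f y
    HasDerivWithinAt u (-(1 / σ) * u 1) (Set.Iic (1 : ℝ)) 1 ∧
      HasDerivWithinAt u ((1 / σ) * u (-1)) (Set.Ici (-1 : ℝ)) (-1) := by
  intro u
  constructor
  · refine (aux_deriv σ hσ f hf 1 1 fun y _ h2 => ?_).hasDerivWithinAt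
    have h := (hasDerivAt_abs_pos (x := 1 - y) (by linarith)).comp_sub_const 1 y
    exact h
  · have h := (aux_deriv σ hσ f hf (-1) (-1) fun y h1 _ => ?_).hasDerivWithinAt
      (s := Set.Ici (-1 : ℝ))
    · rw [neg_div, neg_neg] at h
      exact h
    · exact (hasDerivAt_abs_neg (x := -1 - y) (by linarith)).comp_sub_const (-1) y
end

section
/- Let σ > 0 and let μ be an even positive integer. Then there exists a unique k > 0 satisfying k = μπ/2 + arctan( k / (1 + σ(1+σ)k²) ). Moreover this k lies in the open interval (μπ/2, (μ+1)π/2) and satisfies tan k = k / (1 + σ(1+σ)k²). -/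
open Real

theorem arctan_sub_le_aux {x y : ℝ} (h : x ≤ y) : arctan y - arctan x ≤ y - x := by
  have hm : Monotone (fun x : ℝ => x - arctan x) := by
    apply monotone_of_hasDerivAt_nonneg (f' := fun x => 1 - 1 / (1 + x ^ 2))
    · intro x
      exact (hasDerivAt_id x).sub (hasDerivAt_arctan x)
    · intro x
      have : 1 / (1 + x ^ 2) ≤ 1 := by
        rw [div_le_one (by positivity)]
        nlinarith [sq_nonneg x]
      simpa using this
  have := hm h
  simp only at this
  linarith

theorem phase_lt_aux {c a b : ℝ} (hc : 0 < c) (hb : 0 < b) (hab : b < a) :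
    arctan (a / (1 + c * a ^ 2)) - arctan (b / (1 + c * b ^ 2)) < a - b := by
  have ha : 0 < a := hb.trans hab
  rcases le_total (a / (1 + c * a ^ 2)) (b / (1 + c * b ^ 2)) with h | h
  · have := arctan_strictMono.monotone h
    linarith
  · have h1 := arctan_sub_le_aux h
    have h2 : a / (1 + c * a ^ 2) - b / (1 + c * b ^ 2) < a - b := by
      rw [div_sub_div _ _ (by positivity) (by positivity), div_lt_iff₀ (by positivity)]
      have e : a * (1 + c * b ^ 2) - (1 + c * a ^ 2) * b = (a - b) * (1 - c * a * b) := by ring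
      rw [e]
      apply mul_lt_mul_of_pos_left _ (by linarith)
      have : 0 < c * a * b := by positivity
      have : 0 < c * a ^ 2 := by positivity
      have : 0 < c * b ^ 2 := by positivity
      have : 0 < (c * a ^ 2) * (c * b ^ 2) := by positivity
      nlinarith
    linarith

/-- Even-sector self-consistent quantization condition: for `σ > 0` and even positive `μ`,
there is a unique `k > 0` with `k = μπ/2 + arctan(k/(1+σ(1+σ)k²))`; moreover this `k` lies
in `(μπ/2, (μ+1)π/2)` and satisfies `tan k = k/(1+σ(1+σ)k²)`. -/
theorem even_sector_quantization (σ : ℝ) (hσ : 0 < σ) (μ : ℕ) (hμpos : 0 < μ)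
    (hμeven : Even μ) :
    (∃! k : ℝ, 0 < k ∧
      k = (μ : ℝ) * Real.pi / 2 + Real.arctan (k / (1 + σ * (1 + σ) * k ^ 2))) ∧
    ∀ k : ℝ, 0 < k →
      k = (μ : ℝ) * Real.pi / 2 + Real.arctan (k / (1 + σ * (1 + σ) * k ^ 2)) →
      k ∈ Set.Ioo ((μ : ℝ) * Real.pi / 2) (((μ : ℝ) + 1) * Real.pi / 2) ∧
        Real.tan k = k / (1 + σ * (1 + σ) * k ^ 2) := by
  have hc : 0 < σ * (1 + σ) := by positivity
  generalize σ * (1 + σ) = c at hc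
  have hμ : (0 : ℝ) < μ := by exact_mod_cast hμpos
  have hA : 0 < (μ : ℝ) * π / 2 := by positivity
  refine ⟨?_, ?_⟩
  · have hex : ∃ k ∈ Set.Icc ((μ : ℝ) * π / 2) (((μ : ℝ) + 1) * π / 2),
        k - arctan (k / (1 + c * k ^ 2)) = (μ : ℝ) * π / 2 := by
      have hcont : Continuous (fun k : ℝ => k - arctan (k / (1 + c * k ^ 2))) := by
        refine continuous_id.sub (continuous_arctan.comp (continuous_id.div (by fun_prop) ?_))
        intro x
        positivity
      apply intermediate_value_Icc (by linarith [pi_pos]) hcont.continuousOn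
      constructor
      · have : 0 ≤ arctan ((μ : ℝ) * π / 2 / (1 + c * ((μ : ℝ) * π / 2) ^ 2)) :=
          arctan_nonneg.2 (by positivity)
        linarith
      · have := arctan_lt_pi_div_two
          ((((μ : ℝ) + 1) * π / 2) / (1 + c * (((μ : ℝ) + 1) * π / 2) ^ 2))
        linarith
    obtain ⟨k, hk, hk2⟩ := hex
    refine ⟨k, ⟨hA.trans_le hk.1, by linarith⟩, ?_⟩
    rintro y ⟨hy, hy2⟩
    have hk0 : 0 < k := hA.trans_le hk.1
    rcases lt_trichotomy y k with h | h | h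
    · have := phase_lt_aux hc hy h
      linarith
    · exact h
    · have := phase_lt_aux hc hk0 h
      linarith
  · intro k hk hk2
    have h1 : 0 < arctan (k / (1 + c * k ^ 2)) := arctan_pos.2 (by positivity)
    have h2 := arctan_lt_pi_div_two (k / (1 + c * k ^ 2))
    refine ⟨⟨by linarith, by linarith⟩, ?_⟩
    obtain ⟨m, hm⟩ := hμeven
    have e : k = arctan (k / (1 + c * k ^ 2)) + (m : ℝ) * π := by
      rw [hm] at hk2
      push_cast at hk2
      linarith
    calc tan k = tan (arctan (k / (1 + c * k ^ 2)) + (m : ℝ) * π) := by rw [← e]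
      _ = k / (1 + c * k ^ 2) := by rw [tan_add_nat_mul_pi, tan_arctan]
end

section
/- Let M be a positive integer, set L = 2M+1, and let n be an integer with 1 ≤ n ≤ M. Then ∑_{x=−M}^{M} x · sin(2πnx/L) = (−1)^{n+1} · L / (2·sin(πn/L)). -/
open Finset Real

theorem aux_sum (a : ℝ) (m : ℕ) :
    (∑ x ∈ Finset.Icc (-(m : ℤ)) (m : ℤ), (x : ℝ) * Real.sin (2 * a * x)) * (2 * Real.sin a ^ 2) =
      Real.sin (2 * m * a) - 2 * m * Real.sin a * Real.cos (2 * m * a + a) := by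
  induction m with
  | zero => simp
  | succ m ih =>
    have e : Finset.Icc (-((m + 1 : ℕ) : ℤ)) ((m + 1 : ℕ) : ℤ) =
        insert (-((m : ℤ) + 1)) (insert ((m : ℤ) + 1) (Finset.Icc (-(m : ℤ)) (m : ℤ))) := by
      ext x
      simp only [Finset.mem_insert, Finset.mem_Icc]
      push_cast
      omega
    rw [e, Finset.sum_insert (by simp only [Finset.mem_insert, Finset.mem_Icc]; omega),
      Finset.sum_insert (by simp only [Finset.mem_Icc]; omega), add_mul, add_mul, ih]
    push_cast
    have h1 : 2 * a * (-((m : ℝ) + 1)) = -(2 * m * a + a + a) := by ring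
    have h2 : 2 * a * ((m : ℝ) + 1) = 2 * m * a + a + a := by ring
    have h3 : 2 * ((m : ℝ) + 1) * a = 2 * m * a + a + a := by ring
    have h4 : 2 * (m : ℝ) * a = 2 * m * a + a - a := by ring
    rw [h1, h2, h3, Real.sin_neg]
    rw [show Real.sin (2 * (m : ℝ) * a) = Real.sin (2 * m * a + a - a) by rw [← h4]]
    generalize 2 * (m : ℝ) * a + a = t
    rw [Real.cos_add (t + a) a, Real.sin_sub, Real.sin_add, Real.cos_add]
    have hs := Real.sin_sq_add_cos_sq a
    have hc : Real.cos a ^ 2 = 1 - Real.sin a ^ 2 := by linarith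
    ring_nf
    simp only [hc]
    ring

/-- Overlap of the linear coordinate with a lattice Fourier mode on the odd lattice
`{−M,…,M}` (`L = 2M+1`): for `1 ≤ n ≤ M`,
`∑_{x=−M}^{M} x·sin(2πnx/L) = (−1)^{n+1}·L/(2 sin(πn/L))`. -/
theorem coordinate_fourier_overlap (M : ℕ) (hM : 0 < M) (n : ℕ) (hn1 : 1 ≤ n)
    (hnM : n ≤ M) :
    ∑ x ∈ Finset.Icc (-(M : ℤ)) (M : ℤ),
        (x : ℝ) * Real.sin (2 * Real.pi * n * x / (2 * M + 1)) =
      (-1 : ℝ) ^ (n + 1) * (2 * M + 1) / (2 * Real.sin (Real.pi * n / (2 * M + 1))) := by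
  set a : ℝ := Real.pi * n / (2 * M + 1) with ha
  have hL : (0 : ℝ) < 2 * M + 1 := by positivity
  have hn0 : (1 : ℝ) ≤ n := by exact_mod_cast hn1
  have hnM' : (n : ℝ) ≤ M := by exact_mod_cast hnM
  have hs : 0 < Real.sin a := by
    apply Real.sin_pos_of_pos_of_lt_pi
    · have := Real.pi_pos
      positivity
    · rw [ha, div_lt_iff₀ hL]
      exact mul_lt_mul_of_pos_left (by linarith) Real.pi_pos
  have h := aux_sum a M
  have e1 : 2 * M * a + a = n * Real.pi := by
    rw [ha]
    field_simp
  have e2 : 2 * M * a = n * Real.pi - a := by linarith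
  rw [e1, e2, Real.sin_sub, Real.sin_nat_mul_pi, Real.cos_nat_mul_pi] at h
  have e3 : ∀ x : ℤ, 2 * Real.pi * n * x / (2 * M + 1) = 2 * a * x := by
    intro x
    rw [ha]
    ring
  simp only [e3]
  rw [eq_div_iff (by positivity)]
  apply mul_right_cancel₀ hs.ne'
  rw [pow_succ]
  linear_combination h
end

section
/- Let M be a positive integer, set L = 2M+1, and let R be an integer with 1 ≤ R < M. Then ∑_{n=R+1}^{M} 1/sin²(πn/L) ≤ L²/(π²·R). -/
open Finset Real

theorem aux_step (x y : ℝ) (hx : 0 < x) (hxy : x < y) (hy : y ≤ π / 2) :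
    (y - x) * (1 / sin y ^ 2) ≤ cos x / sin x - cos y / sin y := by
  have hpi := Real.pi_pos
  have hs : ∀ z, x ≤ z → z ≤ y → 0 < sin z := fun z h1 h2 =>
    Real.sin_pos_of_pos_of_lt_pi (by linarith) (by linarith)
  have hd : ∀ z, x ≤ z → z ≤ y →
      HasDerivAt (fun t => cos t / sin t) (-(1 / sin z ^ 2)) z := by
    intro z h1 h2
    have h := (Real.hasDerivAt_cos z).div (Real.hasDerivAt_sin z) (hs z h1 h2).ne'
    have := sin_sq_add_cos_sq z
    have e : -(1 / sin z ^ 2) = (-sin z * sin z - cos z * cos z) / sin z ^ 2 := by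
      rw [← neg_div]
      congr 1
      linarith
    rw [e]
    exact h
  obtain ⟨c, hc, he⟩ := exists_hasDerivAt_eq_slope (fun t => cos t / sin t)
    (fun z => -(1 / sin z ^ 2)) hxy
    (fun z hz => (hd z hz.1 hz.2).continuousAt.continuousWithinAt)
    (fun z hz => hd z hz.1.le hz.2.le)
  have hyx : 0 < y - x := by linarith
  rw [eq_div_iff hyx.ne'] at he
  have h0 := hs c hc.1.le hc.2.le
  have hm : sin c ≤ sin y :=
    Real.sin_le_sin_of_le_of_le_pi_div_two (by linarith [hc.1]) hy hc.2.le
  have h1 : 1 / sin y ^ 2 ≤ 1 / sin c ^ 2 :=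
    one_div_le_one_div_of_le (by positivity) (by gcongr)
  have h2 := mul_le_mul_of_nonneg_left h1 hyx.le
  linarith

/-- Cosecant tail bound: for `L = 2M+1` and `1 ≤ R < M`,
`∑_{n=R+1}^{M} 1/sin²(πn/L) ≤ L²/(π²R)`. -/
theorem cosecant_tail_bound (M : ℕ) (hM : 0 < M) (R : ℕ) (hR1 : 1 ≤ R) (hRM : R < M) :
    ∑ n ∈ Finset.Icc (R + 1) M, 1 / Real.sin (Real.pi * n / (2 * M + 1)) ^ 2 ≤
      (2 * M + 1 : ℝ) ^ 2 / (Real.pi ^ 2 * R) := by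
  have hpi := Real.pi_pos
  have hL : (0 : ℝ) < 2 * M + 1 := by positivity
  have hR : (0 : ℝ) < R := by exact_mod_cast hR1
  have hlt : ∀ m : ℕ, m ≤ M → π * m / (2 * M + 1) < π / 2 := by
    intro m hm
    have : (m : ℝ) ≤ M := by exact_mod_cast hm
    rw [div_lt_div_iff₀ hL (by norm_num)]
    nlinarith
  have key : ∀ m : ℕ, R ≤ m → m ≤ M →
      π / (2 * M + 1) * ∑ n ∈ Finset.Icc (R + 1) m, 1 / sin (π * n / (2 * M + 1)) ^ 2 ≤
      cos (π * R / (2 * M + 1)) / sin (π * R / (2 * M + 1))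
       - cos (π * m / (2 * M + 1)) / sin (π * m / (2 * M + 1)) := by
    intro m hm
    induction m, hm using Nat.le_induction with
    | base => intro _; simp
    | succ m hm ih =>
      intro hmM
      have h1 := ih (by omega)
      rw [Finset.sum_Icc_succ_top (by omega), mul_add]
      have hm0 : (0 : ℝ) < m := by exact_mod_cast (by omega : 0 < m)
      have h2 := aux_step (π * m / (2 * M + 1)) (π * (m + 1 : ℕ) / (2 * M + 1))
        (by positivity) (by gcongr; omega) (hlt _ hmM).le
      have h3 : π * (m + 1 : ℕ) / (2 * M + 1) - π * m / (2 * M + 1) = π / (2 * M + 1) := by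
        push_cast; ring
      rw [h3] at h2
      linarith
  have h := key M hRM.le le_rfl
  have hx0 : 0 < π * M / (2 * M + 1) := by positivity
  have hc : 0 ≤ cos (π * M / (2 * M + 1)) / sin (π * M / (2 * M + 1)) := by
    have := hlt M le_rfl
    exact div_nonneg (Real.cos_nonneg_of_neg_pi_div_two_le_of_le (by linarith) this.le)
      (Real.sin_nonneg_of_nonneg_of_le_pi hx0.le (by linarith))
  have hy0 : 0 < π * R / (2 * M + 1) := by positivity
  have hy1 := hlt R hRM.le
  have ht : cos (π * R / (2 * M + 1)) / sin (π * R / (2 * M + 1))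
      ≤ 1 / (π * R / (2 * M + 1)) := by
    have h1 := Real.lt_tan hy0 hy1
    rw [← inv_div, ← Real.tan_eq_sin_div_cos, ← one_div]
    exact one_div_le_one_div_of_le hy0 h1.le
  have hh : 0 < π / (2 * M + 1) := by positivity
  refine le_of_mul_le_mul_left (a := π / (2 * M + 1)) ?_ hh
  have e : π / (2 * M + 1) * ((2 * M + 1 : ℝ) ^ 2 / (π ^ 2 * R)) = 1 / (π * R / (2 * M + 1)) := by
    field_simp
  rw [e]
  linarith
end

section
/- Let N and d be positive integers, let K_t : ZMod N → ℝ be even (K_t(−j) = K_t(j)), let A ∈ ℝ and β : {1, …, d} → ℝ. Define the matrix M indexed by pairs (x, a) with x ∈ ZMod N and a ∈ {−1, +1}^d by M((x,a),(y,b)) = K_t(x−y) + A + ∑_{r=1}^{d} β_r a_r b_r. For k ∈ ZMod N and S ⊆ {1, …, d} define Φ_{k,S}(x, a) = exp(2πi k x / N) · ∏_{r∈S} a_r, and define μ_k = ∑_{j ∈ ZMod N} exp(2πi k j / N) K_t(j). Then each Φ_{k,S} is an eigenvector of M, with eigenvalue: 2^d μ_0 + A·N·2^d if k = 0 and S = ∅;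 2^d μ_k if k ≠ 0 and S = ∅; N·2^d·β_r if k = 0 and S = {r}; and 0 in all other cases. -/
open Finset Complex

lemma pmi_char (N : ℕ) [NeZero N] (k x : ZMod N) :
    Complex.exp (2 * Real.pi * Complex.I * (k.val : ℂ) * (x.val : ℂ) / N)
      = ZMod.stdAddChar (x * k) := by
  have h := ZMod.stdAddChar_coe (N := N) ((x.val * k.val : ℕ) : ℤ)
  have h2 : (((x.val * k.val : ℕ) : ℤ) : ZMod N) = x * k := by
    push_cast
    simp
  rw [h2] at h
  rw [h]
  congr 1
  push_cast
  ring

lemma pmi_charsum (N : ℕ) [NeZero N] (k : ZMod N) :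
    ∑ y : ZMod N, (ZMod.stdAddChar (y * k) : ℂ) = if k = 0 then (N : ℂ) else 0 := by
  have h := AddChar.sum_mulShift (R := ZMod N) (R' := ℂ) k (ZMod.isPrimitive_stdAddChar N)
  rw [h, ZMod.card]
  split_ifs <;> simp

lemma pmi_conv (N : ℕ) [NeZero N] (Kt : ZMod N → ℝ) (hKt : ∀ j : ZMod N, Kt (-j) = Kt j)
    (k x : ZMod N) :
    ∑ y : ZMod N, ((Kt (x - y) : ℝ) : ℂ) * ZMod.stdAddChar (y * k)
      = (∑ j : ZMod N, ZMod.stdAddChar (j * k) * ((Kt j : ℝ) : ℂ)) * ZMod.stdAddChar (x * k) := by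
  rw [← Equiv.sum_comp (Equiv.addLeft x), Finset.sum_mul]
  refine Finset.sum_congr rfl fun j _ => ?_
  simp only [Equiv.coe_addLeft]
  rw [show x - (x + j) = -j by ring, hKt, add_mul, AddChar.map_add_eq_mul]
  ring

lemma pmi_sumpm (f : ℤ → ℂ) :
    ∑ t : {x : ℤ // x ∈ ({-1, 1} : Finset ℤ)}, f t = f (-1) + f 1 := by
  rw [Finset.sum_coe_sort ({-1, 1} : Finset ℤ) f]
  rw [Finset.sum_pair (by norm_num)]

lemma pmi_walsh (d : ℕ) (S T : Finset (Fin d)) :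
    ∑ b : Fin d → {x : ℤ // x ∈ ({-1, 1} : Finset ℤ)},
      (∏ r ∈ T, ((b r : ℤ) : ℂ)) * ∏ r ∈ S, ((b r : ℤ) : ℂ)
      = if S = T then (2 : ℂ) ^ d else 0 := by
  have h1 : ∀ b : Fin d → {x : ℤ // x ∈ ({-1, 1} : Finset ℤ)},
      (∏ r ∈ T, ((b r : ℤ) : ℂ)) * ∏ r ∈ S, ((b r : ℤ) : ℂ)
      = ∏ r, ((if r ∈ T then ((b r : ℤ) : ℂ) else 1) * (if r ∈ S then ((b r : ℤ) : ℂ) else 1)) := by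
    intro b
    rw [Finset.prod_mul_distrib]
    simp
  simp_rw [h1]
  rw [← Fintype.prod_sum (fun (r : Fin d) (t : {x : ℤ // x ∈ ({-1, 1} : Finset ℤ)}) =>
    ((if r ∈ T then ((t : ℤ) : ℂ) else 1) * (if r ∈ S then ((t : ℤ) : ℂ) else 1)))]
  have h2 : ∀ r : Fin d, ∑ t : {x : ℤ // x ∈ ({-1, 1} : Finset ℤ)},
      ((if r ∈ T then ((t : ℤ) : ℂ) else 1) * (if r ∈ S then ((t : ℤ) : ℂ) else 1))
      = if (r ∈ S ↔ r ∈ T) then 2 else 0 := by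
    intro r
    rw [pmi_sumpm (fun t => (if r ∈ T then (t : ℂ) else 1) * (if r ∈ S then (t : ℂ) else 1))]
    by_cases hS : r ∈ S <;> by_cases hT : r ∈ T <;> simp [hS, hT] <;> norm_num
  simp_rw [h2]
  split_ifs with h
  · subst h
    simp
  · have : ∃ r, ¬ (r ∈ S ↔ r ∈ T) := by
      by_contra hc
      push Not at hc
      exact h (Finset.ext hc)
    obtain ⟨r, hr⟩ := this
    exact Finset.prod_eq_zero (Finset.mem_univ r) (by simp [hr])

lemma pmi_main (N d : ℕ) [NeZero N]
    (Kt : ZMod N → ℝ) (hKt : ∀ j : ZMod N, Kt (-j) = Kt j) (A : ℝ) (β : Fin d → ℝ)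
    (k x : ZMod N) (a : Fin d → {x : ℤ // x ∈ ({-1, 1} : Finset ℤ)}) (S : Finset (Fin d)) :
    ∑ q : ZMod N × (Fin d → {x : ℤ // x ∈ ({-1, 1} : Finset ℤ)}),
      (((Kt (x - q.1) : ℝ) : ℂ) + (A : ℂ) +
          ∑ r, ((β r : ℝ) : ℂ) * ((a r : ℤ) : ℂ) * ((q.2 r : ℤ) : ℂ)) *
        (ZMod.stdAddChar (q.1 * k) * ∏ r ∈ S, ((q.2 r : ℤ) : ℂ))
      = ((∑ j : ZMod N, ZMod.stdAddChar (j * k) * ((Kt j : ℝ) : ℂ)) * ZMod.stdAddChar (x * k)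
          + A * (if k = 0 then (N : ℂ) else 0)) * (if S = ∅ then (2 : ℂ) ^ d else 0)
        + (if k = 0 then (N : ℂ) else 0) *
          ∑ r, ((β r : ℝ) : ℂ) * ((a r : ℤ) : ℂ) * (if S = {r} then (2 : ℂ) ^ d else 0) := by
  have w0 := pmi_walsh d S ∅
  have w1 := fun r => pmi_walsh d S {r}
  simp only [Finset.prod_empty, one_mul] at w0
  simp only [Finset.prod_singleton] at w1
  rw [← pmi_conv N Kt hKt, ← pmi_charsum, ← w0]
  simp_rw [← w1]
  rw [Fintype.sum_prod_type, Finset.mul_sum Finset.univ _ (A : ℂ), ← Finset.sum_add_distrib,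
    Finset.sum_mul, Finset.sum_mul, ← Finset.sum_add_distrib]
  refine Finset.sum_congr rfl fun y _ => ?_
  simp_rw [Finset.mul_sum]
  rw [Finset.sum_comm (s := (Finset.univ : Finset (Fin d))), ← Finset.sum_add_distrib]
  refine Finset.sum_congr rfl fun b _ => ?_
  rw [add_mul, Finset.sum_mul]
  congr 1
  · ring
  · refine Finset.sum_congr rfl fun r _ => ?_
    ring

/-- Spectrum of the combined seasonal–attribute PMI model: the matrix
`M((x,a),(y,b)) = K_t(x−y) + A + ∑_r β_r a_r b_r` on `ZMod N × {−1,+1}^d` is diagonalized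
by the products `Φ_{k,S}(x,a) = e^{2πikx/N}·∏_{r∈S} a_r` of Fourier modes and Walsh
characters, with eigenvalue `2^d μ_0 + A N 2^d` for `(k,S) = (0,∅)`, `2^d μ_k` for
`k ≠ 0, S = ∅`, `N 2^d β_r` for `k = 0, S = {r}`, and `0` otherwise, where
`μ_k = ∑_j e^{2πikj/N} K_t(j)`. -/
theorem seasonal_attribute_pmi_spectrum (N d : ℕ) [NeZero N] (hd : 0 < d)
    (Kt : ZMod N → ℝ) (hKt : ∀ j : ZMod N, Kt (-j) = Kt j) (A : ℝ) (β : Fin d → ℝ) :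
    let H := Fin d → {x : ℤ // x ∈ ({-1, 1} : Finset ℤ)}
    let M : Matrix (ZMod N × H) (ZMod N × H) ℂ :=
      Matrix.of fun p q =>
        ((Kt (p.1 - q.1) : ℝ) : ℂ) + (A : ℂ) +
          ∑ r, ((β r : ℝ) : ℂ) * ((p.2 r : ℤ) : ℂ) * ((q.2 r : ℤ) : ℂ)
    let μ : ZMod N → ℂ := fun k =>
      ∑ j : ZMod N, Complex.exp (2 * Real.pi * Complex.I * (k.val : ℂ) * (j.val : ℂ) / N) *
        ((Kt j : ℝ) : ℂ)
    ∀ (k : ZMod N) (S : Finset (Fin d)),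
      let Φ : ZMod N × H → ℂ := fun p =>
        Complex.exp (2 * Real.pi * Complex.I * (k.val : ℂ) * ((p.1).val : ℂ) / N) *
          ∏ r ∈ S, ((p.2 r : ℤ) : ℂ)
      Φ ≠ 0 ∧
      (k = 0 → S = ∅ → M.mulVec Φ = ((2 : ℂ) ^ d * μ 0 + (A : ℂ) * N * 2 ^ d) • Φ) ∧
      (k ≠ 0 → S = ∅ → M.mulVec Φ = ((2 : ℂ) ^ d * μ k) • Φ) ∧
      (∀ r : Fin d, k = 0 → S = {r} → M.mulVec Φ = (((N : ℂ)) * 2 ^ d * (β r : ℂ)) • Φ) ∧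
      (S ≠ ∅ → ¬(k = 0 ∧ S.card = 1) → M.mulVec Φ = (0 : ℂ) • Φ) := by
  intro H M μ k S Φ
  have hμ : ∀ k, μ k = ∑ j : ZMod N, ZMod.stdAddChar (j * k) * ((Kt j : ℝ) : ℂ) := by
    intro k
    simp only [μ, pmi_char]
  have hΦ : ∀ p, Φ p = ZMod.stdAddChar (p.1 * k) * ∏ r ∈ S, ((p.2 r : ℤ) : ℂ) := by
    intro p
    simp only [Φ, pmi_char]
  have key : ∀ p, M.mulVec Φ p = (μ k * ZMod.stdAddChar (p.1 * k)
          + A * (if k = 0 then (N : ℂ) else 0)) * (if S = ∅ then (2 : ℂ) ^ d else 0)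
        + (if k = 0 then (N : ℂ) else 0) *
          ∑ r, ((β r : ℝ) : ℂ) * ((p.2 r : ℤ) : ℂ) * (if S = {r} then (2 : ℂ) ^ d else 0) := by
    intro p
    rw [hμ, ← pmi_main N d Kt hKt A β k p.1 p.2 S]
    simp only [Matrix.mulVec, dotProduct, hΦ, M, Matrix.of_apply]
    rfl
  refine ⟨?_, ?_, ?_, ?_, ?_⟩
  · intro h
    have := congrFun h (0, fun _ => ⟨1, by simp⟩)
    rw [hΦ] at this
    simp at this
  · rintro hk hS
    ext p
    rw [key, Pi.smul_apply, hΦ, hk, hS]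
    simp [(Finset.singleton_ne_empty _).symm]
    ring
  · rintro hk hS
    ext p
    rw [key, Pi.smul_apply, hΦ, hS]
    simp [hk, (Finset.singleton_ne_empty _).symm]
    ring
  · rintro r hk hS
    ext p
    rw [key, Pi.smul_apply, hΦ, hk, hS]
    simp
    ring
  · rintro hS hk
    ext p
    rw [key, Pi.smul_apply]
    rw [if_neg hS]
    by_cases h : k = 0
    · have : ∀ r, S ≠ {r} := fun r hr => hk ⟨h, by simp [hr]⟩
      simp [this]
    · simp [h]
end
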